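/- arXiv:1406.6210 — 2 statements merged into one kernel-verified Lean document; each statement's English description precedes it below -/
import Mathlib

section
/- For every integer L ≥ 18 with L ≡ 12 (mod 24), M_S(L,3) ≤ (L − 4)/8. -/
open Finset

/-- The set of differences of a codeword `I ⊆ ℤ_L`. -/
def dset {L : ℕ} (I : Finset (ZMod L)) : Finset (ZMod L) :=
  (I ×ˢ I).image fun p => p.1 - p.2

/-- The set of nonzero differences. -/
def dstar {L : ℕ} (I : Finset (ZMod L)) : Finset (ZMod L) := dset I \ {0}

/-- The set of shifted nonzero differences `d⁺(I) = d*(I) ∪ (d*(I)+1)`. -/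
def dplus {L : ℕ} (I : Finset (ZMod L)) : Finset (ZMod L) :=
  dstar I ∪ (dstar I).image (· + 1)

/-- A strongly conflict-avoiding code of length `L` and weight `ω`. -/
def IsSCAC (L ω : ℕ) (C : Finset (Finset (ZMod L))) : Prop :=
  (∀ I ∈ C, I.card = ω) ∧
  (∀ I ∈ C, (1 : ZMod L) ∉ dstar I ∧ (-1 : ZMod L) ∉ dstar I) ∧
  ∀ I ∈ C, ∀ J ∈ C, I ≠ J → Disjoint (dplus I) (dplus J)

/-- `M_S(L,ω)`: the maximum size of an SCAC of length `L` and weight `ω`. -/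
noncomputable def MS (L ω : ℕ) : ℕ :=
  sSup {n | ∃ C : Finset (Finset (ZMod L)), IsSCAC L ω C ∧ C.card = n}

def gg {L : ℕ} (p q : ZMod L) (S : Finset (ZMod L)) : ℕ :=
  (S ∪ S.image (· + 1)).card + (if p ∈ S then 4 else 0) + (if q ∈ S then 2 else 0)

def Good {L : ℕ} (p q : ZMod L) (S : Finset (ZMod L)) : Prop :=
  8 ≤ gg p q S ∧ (gg p q S = 8 → ∀ x ∈ S, x + 1 ∉ S)

structure Ar (L : ℕ) (p q : ZMod L) : Prop where
  h2 : ∀ x : ZMod L, 2 * x ≠ 1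
  h3 : ∀ x : ZMod L, 3 * x ≠ 1
  h4 : ∀ x : ZMod L, 4 * x ≠ 2
  t2 : ∀ x y : ZMod L, 2 * x = 0 → 2 * y = 0 → x = 0 ∨ y = 0 ∨ x = y
  t3 : ∀ x : ZMod L, 3 * x = 0 → x = 0 ∨ x = p ∨ -x = p
  t4 : ∀ x : ZMod L, 4 * x = 0 → 2 * x = 0 ∨ x = q ∨ -x = q

def S6 {L : ℕ} (a b c : ZMod L) : Finset (ZMod L) := {a, -a, b, -b, c, -c}

theorem mem_S6 {L : ℕ} (a b c x : ZMod L) :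
    x ∈ S6 a b c ↔ x = a ∨ x = -a ∨ x = b ∨ x = -b ∨ x = c ∨ x = -c := by
  simp [S6]

theorem S6_rot {L : ℕ} (a b c : ZMod L) : S6 a b c = S6 b c a := by
  ext x; simp only [mem_S6]; tauto

theorem S6_swap {L : ℕ} (a b c : ZMod L) : S6 a b c = S6 b a c := by
  ext x; simp only [mem_S6]; tauto

theorem mem_plus {L : ℕ} (S : Finset (ZMod L)) (x : ZMod L) :
    x ∈ S ∪ S.image (· + 1) ↔ x ∈ S ∨ x - 1 ∈ S := by
  simp only [mem_union, mem_image]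
  constructor
  · rintro (h | ⟨y, hy, rfl⟩)
    · exact Or.inl h
    · right; simpa using hy
  · rintro (h | h)
    · exact Or.inl h
    · exact Or.inr ⟨_, h, by ring⟩

theorem card_ge_of_list {α : Type*} [DecidableEq α] (l : List α) (T : Finset α) (hn : l.Nodup)
    (hs : ∀ x ∈ l, x ∈ T) : l.length ≤ T.card := by
  rw [← List.toFinset_card_of_nodup hn]
  exact Finset.card_le_card fun x hx => hs x (by simpa using hx)

/-- equidifference -/
theorem core_eq {L : ℕ} {p q : ZMod L} (A : Ar L p q) (a c : ZMod L) (h : a + a + c = 0)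
    (a0 : a ≠ 0) (c0 : c ≠ 0) (a1 : a ≠ 1) (a1' : a ≠ -1) :
    Good p q (S6 a a c) := by
  have hc : c = -(2 * a) := by linear_combination h
  have e1 := A.h2 a
  have e2 := A.h2 (-a)
  have e3 := A.h3 a
  have e4 := A.h3 (-a)
  have e5 := A.h2 (2 * a)
  have e6 := A.h2 (-2 * a)
  have na : ∀ x ∈ S6 a a c, x + 1 ∉ S6 a a c := by
    intro x hx hy
    rw [mem_S6] at hx hy
    rcases hx with rfl | rfl | rfl | rfl | rfl | rfl <;>
      rcases hy with hy | hy | hy | hy | hy | hy <;> grind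
  refine ⟨?_, fun _ => na⟩
  unfold gg
  by_cases h3 : 3 * a = 0
  · have hp : p ∈ S6 a a c := by
      rw [mem_S6]
      rcases A.t3 a h3 with h | h | h
      · exact absurd h a0
      · simp [h]
      · simp [h]
    have := card_ge_of_list [a, -a, a + 1, -a + 1] (S6 a a c ∪ (S6 a a c).image (· + 1))
      (by
        simp only [List.nodup_cons, List.mem_cons, List.not_mem_nil, not_or, List.nodup_nil,
          not_false_eq_true, and_true]
        and_intros <;> intro hh <;> grind)
      (by
        simp only [mem_plus, mem_S6, List.forall_mem_cons]
        and_intros <;> grind)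
    simp only [List.length_cons, List.length_nil] at this
    rw [if_pos hp]; omega
  by_cases h4 : 4 * a = 0
  · have hq : q ∈ S6 a a c := by
      rw [mem_S6]
      rcases A.t4 a h4 with h | h | h
      · grind
      · simp [h]
      · simp [h]
    have := card_ge_of_list [a, -a, a + 1, -a + 1, c, c + 1] (S6 a a c ∪ (S6 a a c).image (· + 1))
      (by
        simp only [List.nodup_cons, List.mem_cons, List.not_mem_nil, not_or, List.nodup_nil,
          not_false_eq_true, and_true]
        and_intros <;> intro hh <;> grind)
      (by
        simp only [mem_plus, mem_S6, List.forall_mem_cons]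
        and_intros <;> grind)
    simp only [List.length_cons, List.length_nil] at this
    rw [if_pos hq]; omega
  have := card_ge_of_list [a, -a, a + 1, -a + 1, c, c + 1, -c, -c + 1]
      (S6 a a c ∪ (S6 a a c).image (· + 1))
      (by
        simp only [List.nodup_cons, List.mem_cons, List.not_mem_nil, not_or, List.nodup_nil,
          not_false_eq_true, and_true]
        and_intros <;> intro hh <;> grind)
      (by
        simp only [mem_plus, mem_S6, List.forall_mem_cons]
        and_intros <;> grind)
  simp only [List.length_cons, List.length_nil] at this
  omega

/-- one involution -/
theorem core_inv {L : ℕ} {p q : ZMod L} (A : Ar L p q) (a b c : ZMod L) (h : a + b + c = 0)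
    (a0 : a ≠ 0) (b0 : b ≠ 0) (c0 : c ≠ 0) (a1 : a ≠ 1) (b1 : b ≠ 1) (b1' : b ≠ -1)
    (c1 : c ≠ 1) (c1' : c ≠ -1) (hab : a ≠ b) (hbc : b ≠ c) (hac : a ≠ c)
    (ha : 2 * a = 0) :
    Good p q (S6 a b c) := by
  have hc : c = -a - b := by linear_combination h
  have e1 := A.h2 a
  have e3 := A.h2 b
  have e4 := A.h2 (-b)
  have e5 := A.h2 c
  have e6 := A.h2 (-c)
  have e7 := A.h4 b
  have e8 := A.h4 (-b)
  have tb := A.t2 a b ha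
  have tc := A.t2 a c ha
  have na : ∀ x ∈ S6 a b c, x + 1 ∉ S6 a b c := by
    intro x hx hy
    rw [mem_S6] at hx hy
    rcases hx with rfl | rfl | rfl | rfl | rfl | rfl <;>
      rcases hy with hy | hy | hy | hy | hy | hy <;> grind
  refine ⟨?_, fun _ => na⟩
  unfold gg
  have := card_ge_of_list [b, -b, b + 1, -b + 1, c, c + 1, -c, -c + 1]
      (S6 a b c ∪ (S6 a b c).image (· + 1))
      (by
        simp only [List.nodup_cons, List.mem_cons, List.not_mem_nil, not_or, List.nodup_nil,
          not_false_eq_true, and_true]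
        and_intros <;> intro hh <;> grind)
      (by
        simp only [mem_plus, mem_S6, List.forall_mem_cons]
        and_intros <;> grind)
  simp only [List.length_cons, List.length_nil] at this
  omega

/-- adjacent differences -/
theorem core_adj {L : ℕ} {p q : ZMod L} (A : Ar L p q) (a b c : ZMod L) (h : a + b + c = 0)
    (a0 : a ≠ 0) (b0 : b ≠ 0) (c0 : c ≠ 0) (a1 : a ≠ 1) (a1' : a ≠ -1) (b1 : b ≠ 1) (b1' : b ≠ -1)
    (c1 : c ≠ 1) (c1' : c ≠ -1) (hbc : b ≠ c) (hac : a ≠ c)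
    (ha : 2 * a ≠ 0) (hb : 2 * b ≠ 0) (hc2 : 2 * c ≠ 0) (hadj : b = a + 1) :
    Good p q (S6 a b c) := by
  have hc : c = -2 * a - 1 := by linear_combination h - hadj
  have e1 := A.h2 a
  have e2 := A.h2 (-a)
  have e3 := A.h2 b
  have e4 := A.h2 (-b)
  have e5 := A.h2 c
  have e6 := A.h2 (-c)
  have e9 := A.h2 (a + 2)
  have e10 := A.h2 (-a - 1)
  have f1 := A.h3 a
  have f2 := A.h3 (-a)
  have f3 := A.h3 (a + 1)
  have f4 := A.h3 (-a - 1)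
  suffices 9 ≤ gg p q (S6 a b c) from ⟨by omega, fun h => by omega⟩
  unfold gg
  by_cases h3 : 3 * a = 0 ∨ 3 * b = 0
  · have hp : p ∈ S6 a b c := by
      rw [mem_S6]
      rcases h3 with h3 | h3
      · rcases A.t3 a h3 with h | h | h
        · exact absurd h a0
        · simp [h]
        · simp [h]
      · rcases A.t3 b h3 with h | h | h
        · exact absurd h b0
        · simp [h]
        · simp [h]
    have := card_ge_of_list [a, a + 1, a + 2, -a, -a + 1]
      (S6 a b c ∪ (S6 a b c).image (· + 1))
      (by
        simp only [List.nodup_cons, List.mem_cons, List.not_mem_nil, not_or, List.nodup_nil,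
          not_false_eq_true, and_true]
        and_intros <;> intro hh <;> grind)
      (by
        simp only [mem_plus, mem_S6, List.forall_mem_cons]
        and_intros <;> grind)
    simp only [List.length_cons, List.length_nil] at this
    rw [if_pos hp]; omega
  push Not at h3
  obtain ⟨h3a, h3b⟩ := h3
  have := card_ge_of_list [a, a + 1, a + 2, -a - 1, -a, -a + 1, c, -c, c + 1]
      (S6 a b c ∪ (S6 a b c).image (· + 1))
      (by
        simp only [List.nodup_cons, List.mem_cons, List.not_mem_nil, not_or, List.nodup_nil,
          not_false_eq_true, and_true]
        and_intros <;> intro hh <;> grind)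
      (by
        simp only [mem_plus, mem_S6, List.forall_mem_cons]
        and_intros <;> grind)
  simp only [List.length_cons, List.length_nil] at this
  omega

theorem core {L : ℕ} {p q : ZMod L} (A : Ar L p q) (a b c : ZMod L) (h : a + b + c = 0)
    (a0 : a ≠ 0) (b0 : b ≠ 0) (c0 : c ≠ 0) (a1 : a ≠ 1) (a1' : a ≠ -1) (b1 : b ≠ 1) (b1' : b ≠ -1)
    (c1 : c ≠ 1) (c1' : c ≠ -1) :
    Good p q (S6 a b c) := by
  have h' : b + c + a = 0 := by linear_combination h
  have h'' : c + a + b = 0 := by linear_combination h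
  have r1 : S6 a b c = S6 b c a := S6_rot _ _ _
  have r2 : S6 a b c = S6 c a b := by rw [S6_rot, S6_rot]
  by_cases hab : a = b
  · subst hab; exact core_eq A _ _ h a0 c0 a1 a1'
  by_cases hbc : b = c
  · rw [r1]; subst hbc; exact core_eq A _ _ h' b0 a0 b1 b1'
  by_cases hac : a = c
  · rw [r2]; subst hac; exact core_eq A _ _ h'' a0 b0 a1 a1'
  by_cases ha : 2 * a = 0
  · exact core_inv A _ _ _ h a0 b0 c0 a1 b1 b1' c1 c1' hab hbc hac ha
  by_cases hb : 2 * b = 0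
  · rw [r1]
    exact core_inv A _ _ _ h' b0 c0 a0 b1 c1 c1' a1 a1' hbc (Ne.symm hac) (Ne.symm hab) hb
  by_cases hc : 2 * c = 0
  · rw [r2]
    exact core_inv A _ _ _ h'' c0 a0 b0 c1 a1 a1' b1 b1' (Ne.symm hac) hab (Ne.symm hbc) hc
  by_cases d1 : b = a + 1
  · exact core_adj A a b c h a0 b0 c0 a1 a1' b1 b1' c1 c1' hbc hac ha hb hc d1
  by_cases d2 : a = b + 1
  · rw [S6_swap]
    exact core_adj A b a c (by linear_combination h) b0 a0 c0 b1 b1' a1 a1' c1 c1' hac hbc hb ha hc d2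
  by_cases d3 : c = b + 1
  · rw [r1]
    exact core_adj A b c a h' b0 c0 a0 b1 b1' c1 c1' a1 a1' (Ne.symm hac) (Ne.symm hab) hb hc ha d3
  by_cases d4 : b = c + 1
  · rw [r1, S6_swap]
    exact core_adj A c b a (by linear_combination h) c0 b0 a0 c1 c1' b1 b1' a1 a1' (Ne.symm hab)
      (Ne.symm hac) hc hb ha d4
  by_cases d5 : a = c + 1
  · rw [r2]
    exact core_adj A c a b h'' c0 a0 b0 c1 c1' a1 a1' b1 b1' hab (Ne.symm hbc) hc ha hb d5
  by_cases d6 : c = a + 1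
  · rw [r2, S6_swap]
    exact core_adj A a c b (by linear_combination h) a0 c0 b0 a1 a1' c1 c1' b1 b1' (Ne.symm hbc)
      hab ha hc hb d6
  have e1 := A.h2 a
  have e2 := A.h2 (-a)
  have e3 := A.h2 b
  have e4 := A.h2 (-b)
  have e5 := A.h2 c
  have e6 := A.h2 (-c)
  have hcc : c = -a - b := by linear_combination h
  have na : ∀ x ∈ S6 a b c, x + 1 ∉ S6 a b c := by
    intro x hx hy
    rw [mem_S6] at hx hy
    rcases hx with rfl | rfl | rfl | rfl | rfl | rfl <;>
      rcases hy with hy | hy | hy | hy | hy | hy <;> grind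
  refine ⟨?_, fun _ => na⟩
  unfold gg
  have := card_ge_of_list [b, -b, b + 1, -b + 1, c, c + 1, -c, -c + 1]
      (S6 a b c ∪ (S6 a b c).image (· + 1))
      (by
        simp only [List.nodup_cons, List.mem_cons, List.not_mem_nil, not_or, List.nodup_nil,
          not_false_eq_true, and_true]
        and_intros <;> intro hh <;> grind)
      (by
        simp only [mem_plus, mem_S6, List.forall_mem_cons]
        and_intros <;> grind)
  simp only [List.length_cons, List.length_nil] at this
  omega

theorem arith (L k : ℕ) (hk : L = 24 * k + 12) :
    Ar L ((8 * k + 4 : ℕ) : ZMod L) ((6 * k + 3 : ℕ) : ZMod L) := by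
  haveI : NeZero L := ⟨by omega⟩
  have rep : ∀ x : ZMod L, ∃ n : ℕ, n < L ∧ (n : ZMod L) = x := fun x =>
    ⟨x.val, x.val_lt, by simp⟩
  have key : ∀ m n : ℕ, m < 4 * L → n < 4 * L → (m : ZMod L) = n →
      m % 12 = n % 12 ∧ (m = n ∨ m = n + L ∨ m = n + 2 * L ∨ m = n + 3 * L ∨ n = m + L ∨
        n = m + 2 * L ∨ n = m + 3 * L) := by
    intro m n hm hn h
    rw [ZMod.natCast_eq_natCast_iff] at h
    rcases le_total m n with hle | hle
    · obtain ⟨t, ht⟩ := (Nat.modEq_iff_dvd' hle).1 h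
      have : t < 4 := by
        by_contra hc
        have : L * 4 ≤ L * t := Nat.mul_le_mul_left _ (by omega)
        omega
      interval_cases t <;> omega
    · obtain ⟨t, ht⟩ := (Nat.modEq_iff_dvd' hle).1 h.symm
      have : t < 4 := by
        by_contra hc
        have : L * 4 ≤ L * t := Nat.mul_le_mul_left _ (by omega)
        omega
      interval_cases t <;> omega
  have neg : ∀ m n : ℕ, m + n = L → -(m : ZMod L) = n := by
    intro m n h
    have : ((m + n : ℕ) : ZMod L) = 0 := by rw [h]; simp
    push_cast at this
    linear_combination -this
  refine ⟨?_, ?_, ?_, ?_, ?_, ?_⟩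
  · intro x h
    obtain ⟨n, hn, rfl⟩ := rep x
    have := key (2 * n) 1 (by omega) (by omega) (by push_cast; exact h)
    omega
  · intro x h
    obtain ⟨n, hn, rfl⟩ := rep x
    have := key (3 * n) 1 (by omega) (by omega) (by push_cast; exact h)
    omega
  · intro x h
    obtain ⟨n, hn, rfl⟩ := rep x
    have := key (4 * n) 2 (by omega) (by omega) (by push_cast; exact h)
    omega
  · intro x y h h'
    obtain ⟨n, hn, rfl⟩ := rep x
    obtain ⟨m, hm, rfl⟩ := rep y
    have i1 := (key (2 * n) 0 (by omega) (by omega) (by push_cast; exact h)).2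
    have i2 := (key (2 * m) 0 (by omega) (by omega) (by push_cast; exact h')).2
    have : n = 0 ∨ m = 0 ∨ n = m := by omega
    rcases this with h | h | h <;> simp [h]
  · intro x h
    obtain ⟨n, hn, rfl⟩ := rep x
    have i1 := (key (3 * n) 0 (by omega) (by omega) (by push_cast; exact h)).2
    have : n = 0 ∨ n = 8 * k + 4 ∨ n + (8 * k + 4) = L := by omega
    rcases this with h | h | h
    · simp [h]
    · simp [h]
    · right; right; exact neg _ _ h
  · intro x h
    obtain ⟨n, hn, rfl⟩ := rep x
    have i1 := (key (4 * n) 0 (by omega) (by omega) (by push_cast; exact h)).2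
    have : 2 * n = 0 ∨ 2 * n = L ∨ n = 6 * k + 3 ∨ n + (6 * k + 3) = L := by omega
    rcases this with h | h | h | h
    · left; have : ((2 * n : ℕ) : ZMod L) = 0 := by rw [h]; simp
      push_cast at this; exact this
    · left; have : ((2 * n : ℕ) : ZMod L) = 0 := by rw [h]; simp
      push_cast at this; exact this
    · simp [h]
    · right; right; exact neg _ _ h

theorem dstar_eq {L : ℕ} {x y z : ZMod L} (hxy : x ≠ y) (hxz : x ≠ z) (hyz : y ≠ z) :
    dstar {x, y, z} = S6 (x - y) (y - z) (z - x) := by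
  ext w
  simp only [dstar, dset, mem_sdiff, mem_image, mem_product, mem_singleton, mem_insert, mem_S6,
    Prod.exists]
  constructor
  · rintro ⟨⟨u, v, ⟨h1, h2⟩, rfl⟩, h0⟩
    rcases h1 with rfl | rfl | rfl <;> rcases h2 with rfl | rfl | rfl <;> simp_all
  · rintro (rfl | rfl | rfl | rfl | rfl | rfl)
    · exact ⟨⟨x, y, by simp, rfl⟩, sub_ne_zero.2 hxy⟩
    · exact ⟨⟨y, x, by simp, by ring⟩, by simpa using sub_ne_zero.2 hxy.symm⟩
    · exact ⟨⟨y, z, by simp, rfl⟩, sub_ne_zero.2 hyz⟩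
    · exact ⟨⟨z, y, by simp, by ring⟩, by simpa using sub_ne_zero.2 hyz.symm⟩
    · exact ⟨⟨z, x, by simp, rfl⟩, sub_ne_zero.2 hxz.symm⟩
    · exact ⟨⟨x, z, by simp, by ring⟩, by simpa using sub_ne_zero.2 hxz⟩

theorem word {L : ℕ} {p q : ZMod L} (A : Ar L p q) (I : Finset (ZMod L)) (hI : I.card = 3)
    (h1 : (1 : ZMod L) ∉ dstar I) (h2 : (-1 : ZMod L) ∉ dstar I) : Good p q (dstar I) := by
  obtain ⟨x, y, z, hxy, hxz, hyz, rfl⟩ := Finset.card_eq_three.1 hI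
  rw [dstar_eq hxy hxz hyz] at *
  rw [mem_S6] at h1 h2
  push Not at h1 h2
  obtain ⟨u1, -, u2, -, u3, -⟩ := h1
  obtain ⟨v1, -, v2, -, v3, -⟩ := h2
  exact core A _ _ _ (by ring) (sub_ne_zero.2 hxy) (sub_ne_zero.2 hyz) (sub_ne_zero.2 hxz.symm)
    u1.symm v1.symm u2.symm v2.symm u3.symm v3.symm

theorem ind_sum {L : ℕ} {C : Finset (Finset (ZMod L))} (p : ZMod L) (w : ℕ)
    (hd : ∀ I ∈ C, ∀ J ∈ C, I ≠ J → Disjoint (dplus I) (dplus J)) :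
    (∑ I ∈ C, if p ∈ dstar I then w else 0) ≤ w := by
  rw [← Finset.sum_filter, Finset.sum_const, smul_eq_mul]
  have : (C.filter fun I => p ∈ dstar I).card ≤ 1 := by
    rw [Finset.card_le_one]
    intro I hI J hJ
    rw [mem_filter] at hI hJ
    by_contra hne
    exact Finset.disjoint_left.1 (hd I hI.1 J hJ.1 hne) (mem_union_left _ hI.2)
      (mem_union_left _ hJ.2)
  nlinarith

theorem bound_card (L k : ℕ) (hk : L = 24 * k + 12) (C : Finset (Finset (ZMod L)))
    (hC : IsSCAC L 3 C) : C.card ≤ 3 * k + 1 := by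
  haveI : NeZero L := ⟨by omega⟩
  obtain ⟨hw, hpm, hd⟩ := hC
  by_contra hcard
  have A := arith L k hk
  set p : ZMod L := ((8 * k + 4 : ℕ) : ZMod L) with hp
  set q : ZMod L := ((6 * k + 3 : ℕ) : ZMod L) with hq
  have hgood : ∀ I ∈ C, Good p q (dstar I) := fun I hI =>
    word A I (hw I hI) (hpm I hI).1 (hpm I hI).2
  have hp1 := ind_sum p 4 hd
  have hq1 := ind_sum q 2 hd
  have hs : (∑ I ∈ C, gg p q (dstar I)) = (∑ I ∈ C, (dplus I).card)
      + (∑ I ∈ C, if p ∈ dstar I then 4 else 0) + (∑ I ∈ C, if q ∈ dstar I then 2 else 0) := by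
    rw [← Finset.sum_add_distrib, ← Finset.sum_add_distrib]; rfl
  have hU : (C.biUnion dplus).card = ∑ I ∈ C, (dplus I).card :=
    Finset.card_biUnion fun I hI J hJ h => hd I hI J hJ h
  have h10 : (1 : ZMod L) ≠ 0 := by
    have := A.h2 0
    intro h; apply this; rw [h]; simp
  have d0 : ∀ I : Finset (ZMod L), (0 : ZMod L) ∉ dstar I := by
    intro I; simp [dstar]
  have hcompl : (univ \ {0, 1} : Finset (ZMod L)).card = L - 2 := by
    rw [Finset.card_sdiff_of_subset (by simp), Finset.card_univ, ZMod.card,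
      Finset.card_pair h10.symm]
  have hsub : C.biUnion dplus ⊆ univ \ {0, 1} := by
    intro x hx
    obtain ⟨I, hI, hx⟩ := mem_biUnion.1 hx
    have hx' := (mem_plus _ _).1 hx
    simp only [mem_sdiff, mem_univ, true_and, mem_insert, mem_singleton, not_or]
    constructor
    · rintro rfl
      rcases hx' with h | h
      · exact d0 I h
      · exact (hpm I hI).2 (by simpa using h)
    · rintro rfl
      rcases hx' with h | h
      · exact (hpm I hI).1 h
      · exact d0 I (by simpa using h)
  have hle := Finset.card_le_card hsub
  have h8 : ∑ I ∈ C, 8 ≤ ∑ I ∈ C, gg p q (dstar I) := Finset.sum_le_sum fun I hI => (hgood I hI).1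
  have h8' : ∑ I ∈ C, 8 = C.card * 8 := by simp
  have heq : ∑ I ∈ C, 8 = ∑ I ∈ C, gg p q (dstar I) := by omega
  have hall := (Finset.sum_eq_sum_iff_of_le fun I hI => (hgood I hI).1).1 heq
  have hna : ∀ I ∈ C, ∀ x ∈ dstar I, x + 1 ∉ dstar I := fun I hI =>
    (hgood I hI).2 (hall I hI).symm
  have hUeq : C.biUnion dplus = univ \ {0, 1} :=
    Finset.eq_of_subset_of_card_le hsub (by omega)
  have hqs : (∑ I ∈ C, if q ∈ dstar I then 2 else 0) ≠ 0 := by omega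
  obtain ⟨I, hI, hqI⟩ := Finset.exists_ne_zero_of_sum_ne_zero hqs
  have hqI' : q ∈ dstar I := by
    by_contra h; simp [h] at hqI
  have hodd : ∀ m : ℕ, 2 * m + 1 < L → ∀ I ∈ C, ((2 * m + 1 : ℕ) : ZMod L) ∉ dstar I := by
    intro m
    induction m with
    | zero => intro _ I hI; simpa using (hpm I hI).1
    | succ m ih =>
      intro hm I hI h
      have ih := ih (by omega)
      have hmem : ((2 * m + 2 : ℕ) : ZMod L) ∈ C.biUnion dplus := by
        rw [hUeq]
        simp only [mem_sdiff, mem_univ, true_and, mem_insert, mem_singleton, not_or]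
        constructor
        · intro h0
          rw [ZMod.natCast_eq_zero_iff] at h0
          have := Nat.le_of_dvd (by omega) h0
          omega
        · intro h0
          have h0 : ((2 * m + 2 : ℕ) : ZMod L) = ((1 : ℕ) : ZMod L) := by simpa using h0
          rw [ZMod.natCast_eq_natCast_iff'] at h0
          rw [Nat.mod_eq_of_lt (by omega), Nat.mod_eq_of_lt (by omega)] at h0
          omega
      obtain ⟨J, hJ, hx⟩ := mem_biUnion.1 hmem
      rcases (mem_plus _ _).1 hx with h' | h'
      · have e : ((2 * (m + 1) + 1 : ℕ) : ZMod L) = ((2 * m + 2 : ℕ) : ZMod L) + 1 := by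
          push_cast; ring
        rw [e] at h
        by_cases hIJ : I = J
        · subst hIJ; exact hna I hI _ h' h
        · exact Finset.disjoint_left.1 (hd I hI J hJ hIJ) (mem_union_left _ h)
            ((mem_plus _ _).2 (Or.inr (by simpa using h')))
      · apply ih J hJ
        have e : ((2 * m + 1 : ℕ) : ZMod L) = ((2 * m + 2 : ℕ) : ZMod L) - 1 := by
          push_cast; ring
        rw [e]; exact h'
  refine hodd (3 * k + 1) (by omega) I hI ?_
  have : 2 * (3 * k + 1) + 1 = 6 * k + 3 := by ring
  rw [this]; exact hqI'

theorem MS_upper_mod24 (L : ℕ) (hL : 18 ≤ L) (hmod : L % 24 = 12) :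
    MS L 3 ≤ (L - 4) / 8 := by
  obtain ⟨k, hk⟩ : ∃ k, L = 24 * k + 12 := ⟨L / 24, by omega⟩
  have e : (L - 4) / 8 = 3 * k + 1 := by omega
  rw [e]
  apply csSup_le'
  rintro n ⟨C, hC, rfl⟩
  exact bound_card L k hk C hC
end

section
/- Let L ≥ 18 be an integer such that L = 2^{2t+1} + 2 for some integer t ≥ 1, or L = 2^{2t} − 2^{t+1} + 2 for some integer t ≥ 2, or L = 2^{2t} + 2^{t+1} + 2 for some integer t ≥ 1. Then M_S(L,3) = (L − 2)/8. -/
open Finset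

section helpers

theorem mem_dstar' {L : ℕ} {I : Finset (ZMod L)} {x : ZMod L} :
    x ∈ dstar I ↔ (∃ a ∈ I, ∃ b ∈ I, a - b = x) ∧ x ≠ 0 := by
  simp only [dstar, dset, mem_sdiff, mem_image, mem_product, mem_singleton, Prod.exists]
  constructor
  · rintro ⟨⟨a, b, ⟨ha, hb⟩, h⟩, h0⟩
    exact ⟨⟨a, ha, b, hb, h⟩, h0⟩
  · rintro ⟨⟨a, ha, b, hb, h⟩, h0⟩
    exact ⟨⟨a, b, ⟨ha, hb⟩, h⟩, h0⟩

theorem mem_dplus' {L : ℕ} {I : Finset (ZMod L)} {x : ZMod L} :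
    x ∈ dplus I ↔ x ∈ dstar I ∨ x - 1 ∈ dstar I := by
  simp only [dplus, mem_union, mem_image]
  constructor
  · rintro (h | ⟨a, h, rfl⟩)
    · exact Or.inl h
    · right; simpa using h
  · rintro (h | h)
    · exact Or.inl h
    · exact Or.inr ⟨_, h, by ring⟩

theorem neg_dstar {L : ℕ} {I : Finset (ZMod L)} {x : ZMod L} (h : x ∈ dstar I) :
    -x ∈ dstar I := by
  rw [mem_dstar'] at *
  obtain ⟨⟨a, ha, b, hb, h⟩, h0⟩ := h
  exact ⟨⟨b, hb, a, ha, by rw [← h]; ring⟩, by simpa using h0⟩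

/-- four labels give eight elements -/
theorem eight_of_labels {L n : ℕ} (hLn : L = 2 * n) (S : Finset (ZMod L)) (k1 k2 k3 k4 : ℕ)
    (h1 : 2 ≤ k1) (h12 : k1 < k2) (h23 : k2 < k3) (h34 : k3 < k4) (h4 : k4 ≤ n)
    (m1 : (k1 : ZMod L) ∈ S ∧ 1 - (k1 : ZMod L) ∈ S)
    (m2 : (k2 : ZMod L) ∈ S ∧ 1 - (k2 : ZMod L) ∈ S)
    (m3 : (k3 : ZMod L) ∈ S ∧ 1 - (k3 : ZMod L) ∈ S)
    (m4 : (k4 : ZMod L) ∈ S ∧ 1 - (k4 : ZMod L) ∈ S) : 8 ≤ S.card := by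
  have hc : ∀ k : ℕ, k ≤ n → ((L + 1 - k : ℕ) : ZMod L) = 1 - (k : ZMod L) := by
    intro k hk
    rw [Nat.cast_sub (by omega)]
    simp
  let T : Finset ℕ := {k1, k2, k3, k4, L + 1 - k1, L + 1 - k2, L + 1 - k3, L + 1 - k4}
  have hT : T.card = 8 := by
    simp only [T]
    repeat rw [Finset.card_insert_of_notMem (by simp only [mem_insert, mem_singleton]; omega)]
    simp
  rw [← hT]
  apply Finset.card_le_card_of_injOn (fun k : ℕ => (k : ZMod L))
  · intro k hk
    simp only [T, coe_insert, coe_singleton, Set.mem_insert_iff, Set.mem_singleton_iff] at hk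
    rcases hk with rfl | rfl | rfl | rfl | rfl | rfl | rfl | rfl
    · exact m1.1
    · exact m2.1
    · exact m3.1
    · exact m4.1
    · show ((_ : ℕ) : ZMod L) ∈ _
      rw [hc _ (by omega)]; exact m1.2
    · show ((_ : ℕ) : ZMod L) ∈ _
      rw [hc _ (by omega)]; exact m2.2
    · show ((_ : ℕ) : ZMod L) ∈ _
      rw [hc _ (by omega)]; exact m3.2
    · show ((_ : ℕ) : ZMod L) ∈ _
      rw [hc _ (by omega)]; exact m4.2
  · intro a ha b hb hab
    simp only [T, coe_insert, coe_singleton, Set.mem_insert_iff, Set.mem_singleton_iff] at ha hb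
    have ha' : a < L := by omega
    have hb' : b < L := by omega
    have := (ZMod.natCast_eq_natCast_iff' a b L).1 hab
    rwa [Nat.mod_eq_of_lt ha', Nat.mod_eq_of_lt hb'] at this

theorem labels_of {L : ℕ} {I : Finset (ZMod L)} {k : ℕ} (h : (k : ZMod L) ∈ dstar I) :
    ((k : ZMod L) ∈ dplus I ∧ 1 - (k : ZMod L) ∈ dplus I) ∧
    (((k + 1 : ℕ) : ZMod L) ∈ dplus I ∧ 1 - ((k + 1 : ℕ) : ZMod L) ∈ dplus I) := by
  have h' := neg_dstar h
  refine ⟨⟨mem_dplus'.2 (Or.inl h), mem_dplus'.2 (Or.inr ?_)⟩,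
    ⟨mem_dplus'.2 (Or.inr ?_), mem_dplus'.2 (Or.inl ?_)⟩⟩
  · convert h' using 1; ring
  · convert h using 1; push_cast; ring
  · convert h' using 1; push_cast; ring

theorem gaps_sorted {L n : ℕ} (hLn : L = 2 * n) (hn : n % 2 = 1) {I : Finset (ZMod L)}
    (p q r : ℕ) (hp : 2 ≤ p) (hpq : p ≤ q) (hqr : q ≤ r) (hs : p + q + r = L)
    (mp : (p : ZMod L) ∈ dstar I) (mq : (q : ZMod L) ∈ dstar I) (mr : (r : ZMod L) ∈ dstar I) :
    ((L / 3 : ℕ) : ZMod L) ∈ dplus I ∨ 8 ≤ (dplus I).card := by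
  rcases lt_trichotomy r n with h | h | h
  · by_cases h2 : p + 2 ≤ r
    · right
      exact eight_of_labels hLn _ p (p+1) r (r+1) hp (by omega) (by omega) (by omega) (by omega)
        (labels_of mp).1 (labels_of mp).2 (labels_of mr).1 (labels_of mr).2
    · left
      have : L / 3 = p := by omega
      rw [this]; exact (labels_of mp).1.1
  · right
    exact eight_of_labels hLn _ p (p+1) (q+1) r hp (by omega) (by omega) (by omega) (by omega)
        (labels_of mp).1 (labels_of mp).2 (labels_of mq).2 (labels_of mr).1
  · right
    have m : ((p + q : ℕ) : ZMod L) ∈ dstar I := by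
      have e : ((p + q : ℕ) : ZMod L) = - (r : ZMod L) := by
        rw [eq_neg_iff_add_eq_zero, ← Nat.cast_add, hs]; simp
      rw [e]; exact neg_dstar mr
    exact eight_of_labels hLn _ p (p+1) (p+q) (p+q+1) hp (by omega) (by omega) (by omega)
        (by omega) (labels_of mp).1 (labels_of mp).2 (labels_of m).1 (labels_of m).2

theorem gaps_ge {L : ℕ} (hL : 2 ≤ L) {I : Finset (ZMod L)} (h1 : (1 : ZMod L) ∉ dstar I)
    {p : ℕ} (hp : 1 ≤ p) (m : (p : ZMod L) ∈ dstar I) : 2 ≤ p := by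
  rcases Nat.lt_or_ge p 2 with h | h
  · have : p = 1 := by omega
    subst this
    simp at m
    exact absurd m h1
  · exact h

theorem gaps_any {L n : ℕ} (hL : 2 ≤ L) (hLn : L = 2 * n) (hn : n % 2 = 1) {I : Finset (ZMod L)}
    (h1 : (1 : ZMod L) ∉ dstar I)
    (p q r : ℕ) (hp : 1 ≤ p) (hq : 1 ≤ q) (hr : 1 ≤ r) (hs : p + q + r = L)
    (mp : (p : ZMod L) ∈ dstar I) (mq : (q : ZMod L) ∈ dstar I) (mr : (r : ZMod L) ∈ dstar I) :
    ((L / 3 : ℕ) : ZMod L) ∈ dplus I ∨ 8 ≤ (dplus I).card := by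
  have hp := gaps_ge hL h1 hp mp
  have hq := gaps_ge hL h1 hq mq
  have hr := gaps_ge hL h1 hr mr
  rcases le_total p q with a | a <;> rcases le_total q r with b | b <;>
    rcases le_total p r with c | c
  · exact gaps_sorted hLn hn p q r hp a b hs mp mq mr
  · exact gaps_sorted hLn hn p q r hp a b hs mp mq mr
  · exact gaps_sorted hLn hn p r q hp c b (by omega) mp mr mq
  · exact gaps_sorted hLn hn r p q hr c a (by omega) mr mp mq
  · exact gaps_sorted hLn hn q p r hq a c (by omega) mq mp mr
  · exact gaps_sorted hLn hn q r p hq b c (by omega) mq mr mp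
  · exact gaps_sorted hLn hn r q p hr b a (by omega) mr mq mp
  · exact gaps_sorted hLn hn r q p hr b a (by omega) mr mq mp

theorem vals_sorted {L n : ℕ} [NeZero L] (hL : 2 ≤ L) (hLn : L = 2 * n) (hn : n % 2 = 1)
    {I : Finset (ZMod L)} (h1 : (1 : ZMod L) ∉ dstar I) (x y z : ZMod L)
    (hx : x ∈ I) (hy : y ∈ I) (hz : z ∈ I) (hxy : x.val < y.val) (hyz : y.val < z.val) :
    ((L / 3 : ℕ) : ZMod L) ∈ dplus I ∨ 8 ≤ (dplus I).card := by
  have hzL := ZMod.val_lt z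
  have nxy : y - x ≠ 0 := by
    intro h; rw [sub_eq_zero] at h; subst h; omega
  have nyz : z - y ≠ 0 := by
    intro h; rw [sub_eq_zero] at h; subst h; omega
  have nxz : x - z ≠ 0 := by
    intro h; rw [sub_eq_zero] at h; subst h; omega
  refine gaps_any hL hLn hn h1 (y.val - x.val) (z.val - y.val) (L + x.val - z.val)
    (by omega) (by omega) (by omega) (by omega) ?_ ?_ ?_
  · rw [Nat.cast_sub hxy.le]
    simp only [ZMod.natCast_val, ZMod.cast_id', id_eq]
    exact mem_dstar'.2 ⟨⟨y, hy, x, hx, rfl⟩, nxy⟩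
  · rw [Nat.cast_sub hyz.le]
    simp only [ZMod.natCast_val, ZMod.cast_id', id_eq]
    exact mem_dstar'.2 ⟨⟨z, hz, y, hy, rfl⟩, nyz⟩
  · rw [Nat.cast_sub (by omega)]
    simp only [Nat.cast_add, CharP.cast_eq_zero, zero_add, ZMod.natCast_val, ZMod.cast_id', id_eq]
    exact mem_dstar'.2 ⟨⟨x, hx, z, hz, rfl⟩, nxz⟩

theorem codeword_bound {L n : ℕ} [NeZero L] (hL : 2 ≤ L) (hLn : L = 2 * n) (hn : n % 2 = 1)
    {I : Finset (ZMod L)} (hI : I.card = 3) (h1 : (1 : ZMod L) ∉ dstar I) :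
    ((L / 3 : ℕ) : ZMod L) ∈ dplus I ∨ 8 ≤ (dplus I).card := by
  obtain ⟨x, y, z, hxy, hxz, hyz, rfl⟩ := Finset.card_eq_three.1 hI
  have vxy := fun h => hxy (ZMod.val_injective L h)
  have vxz := fun h => hxz (ZMod.val_injective L h)
  have vyz := fun h => hyz (ZMod.val_injective L h)
  have mx : x ∈ ({x, y, z} : Finset (ZMod L)) := by simp
  have my : y ∈ ({x, y, z} : Finset (ZMod L)) := by simp
  have mz : z ∈ ({x, y, z} : Finset (ZMod L)) := by simp
  rcases lt_or_gt_of_ne vxy with a | a <;> rcases lt_or_gt_of_ne vyz with b | b <;>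
    rcases lt_or_gt_of_ne vxz with c | c
  · exact vals_sorted hL hLn hn h1 x y z mx my mz a b
  · omega
  · exact vals_sorted hL hLn hn h1 x z y mx mz my c b
  · exact vals_sorted hL hLn hn h1 z x y mz mx my c a
  · exact vals_sorted hL hLn hn h1 y x z my mx mz a c
  · exact vals_sorted hL hLn hn h1 y z x my mz mx b c
  · omega
  · exact vals_sorted hL hLn hn h1 z y x mz my mx b a

theorem upper_bound {L m : ℕ} (hm : 1 ≤ m) (hLm : L = 8 * m + 2)
    {C : Finset (Finset (ZMod L))} (hC : IsSCAC L 3 C) : C.card ≤ m := by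
  haveI : NeZero L := ⟨by omega⟩
  haveI : Fact (1 < L) := ⟨by omega⟩
  obtain ⟨hcard, hone, hdis⟩ := hC
  have hb : ∀ I ∈ C, ((L / 3 : ℕ) : ZMod L) ∈ dplus I ∨ 8 ≤ (dplus I).card := fun I hI =>
    codeword_bound (n := 4 * m + 1) (by omega) (by omega) (by omega) (hcard I hI) (hone I hI).1
  have htot : ∑ I ∈ C, (dplus I).card ≤ 8 * m := by
    rw [← Finset.card_biUnion (fun I hI J hJ h => hdis I hI J hJ h)]
    have hsub : C.biUnion dplus ⊆ Finset.univ \ {0, 1} := by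
      intro x hx
      obtain ⟨I, hI, hx⟩ := Finset.mem_biUnion.1 hx
      have h0 : (0 : ZMod L) ∉ dstar I := fun h => (mem_dstar'.1 h).2 rfl
      simp only [mem_sdiff, mem_univ, true_and, mem_insert, mem_singleton]
      rintro (rfl | rfl) <;> rw [mem_dplus'] at hx <;> rcases hx with h | h
      · exact h0 h
      · rw [zero_sub] at h; exact (hone I hI).2 h
      · exact (hone I hI).1 h
      · rw [sub_self] at h; exact h0 h
    have := Finset.card_le_card hsub
    rw [Finset.card_sdiff_of_subset (by simp), Finset.card_univ, ZMod.card,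
      Finset.card_pair (by simp)] at this
    omega
  by_cases hex : ∃ I ∈ C, ((L / 3 : ℕ) : ZMod L) ∈ dplus I
  · obtain ⟨I, hI, hmem⟩ := hex
    rw [← Finset.add_sum_erase C _ hI] at htot
    have h8 : ∀ J ∈ C.erase I, 8 ≤ (dplus J).card := by
      intro J hJ
      rw [mem_erase] at hJ
      rcases hb J hJ.2 with h | h
      · exact absurd h (Finset.disjoint_left.1 (hdis I hI J hJ.2 hJ.1.symm) hmem)
      · exact h
    have h2 := Finset.card_nsmul_le_sum _ _ _ h8
    rw [smul_eq_mul, Finset.card_erase_of_mem hI] at h2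
    have h3 : 0 < (dplus I).card := Finset.card_pos.2 ⟨_, hmem⟩
    omega
  · push Not at hex
    have h8 : ∀ J ∈ C, 8 ≤ (dplus J).card := fun J hJ => (hb J hJ).resolve_left (hex J hJ)
    have h2 := Finset.card_nsmul_le_sum _ _ _ h8
    rw [smul_eq_mul] at h2
    omega

/-- an abstract two-colouring -/
theorem exists_coloring {R : Type*} [CommRing R] (E : Set R) (s : ℕ)
    (h2 : ∀ a ∈ E, 2 * a ∈ E) (hneg : ∀ a ∈ E, 2 ^ (2 * s) * a = -a)
    (hE : ∀ a ∈ E, a ≠ -a) :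
    ∃ A : Set R, ∀ a ∈ E, (a ∈ A ↔ -a ∈ A) ∧ (a ∈ A ↔ 2 * a ∉ A) := by
  classical
  let O : R → Set R := fun x => {y | ∃ i : ℕ, y = 2 ^ i * x}
  have hON : ∀ x, (O x).Nonempty := fun x => ⟨x, 0, by simp⟩
  have hfour : ∀ a ∈ E, ∀ k : ℕ, 2 ^ (4 * s * k) * a = a := by
    intro a ha k
    induction k with
    | zero => simp
    | succ k ih =>
      have h := hneg a ha
      calc (2 : R) ^ (4 * s * (k + 1)) * a
          = 2 ^ (4 * s * k) * (2 ^ (2 * s) * (2 ^ (2 * s) * a)) := by ring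
        _ = 2 ^ (4 * s * k) * a := by rw [h, mul_neg, h, neg_neg]
        _ = a := ih
  have hpow : ∀ i : ℕ, ∀ a ∈ E, 2 ^ i * a ∈ E := by
    intro i
    induction i with
    | zero => intro a ha; simpa using ha
    | succ i ih =>
      intro a ha
      have := h2 _ (ih a ha)
      convert this using 1; ring
  have hs : ∀ a ∈ E, 1 ≤ s := by
    intro a ha
    by_contra h
    have : s = 0 := by omega
    subst this
    have := hneg a ha
    simp at this
    exact hE a ha this
  have hO2 : ∀ a ∈ E, O (2 * a) = O a := by
    intro a ha
    ext y
    constructor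
    · rintro ⟨i, rfl⟩; exact ⟨i + 1, by ring⟩
    · rintro ⟨i, rfl⟩
      refine ⟨i + (4 * s - 1), ?_⟩
      have h1 := hs a ha
      have h := hfour a ha 1
      conv_lhs => rw [← h]
      have e : 4 * s * 1 = (4 * s - 1) + 1 := by omega
      rw [e]; ring
  have hOp : ∀ i : ℕ, ∀ a ∈ E, O (2 ^ i * a) = O a := by
    intro i
    induction i with
    | zero => intro a ha; simp
    | succ i ih =>
      intro a ha
      have := hO2 _ (hpow i a ha)
      rw [← ih a ha, ← this]; congr 1; ring
  let ρ : R → R := fun x => Classical.epsilon (fun y => y ∈ O x)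
  have hρ : ∀ x, ρ x ∈ O x := fun x => Classical.epsilon_spec (hON x)
  have hρe : ∀ x y, O x = O y → ρ x = ρ y := by
    intro x y h; simp only [ρ, h]
  -- every element is a power times its representative
  have hrep : ∀ a ∈ E, ∃ i : ℕ, a = 2 ^ i * ρ a := by
    intro a ha
    obtain ⟨i, hi⟩ := hρ a
    have h1 := hs a ha
    refine ⟨4 * s * i - i, ?_⟩
    rw [hi, ← mul_assoc, ← pow_add]
    have : 4 * s * i - i + i = 4 * s * i := Nat.sub_add_cancel (by nlinarith)
    rw [this, hfour a ha i]
  have hρE : ∀ a ∈ E, ρ a ∈ E := by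
    intro a ha
    obtain ⟨i, hi⟩ := hρ a
    rw [hi]; exact hpow i a ha
  -- no odd power fixes
  have hodd : ∀ r ∈ E, ∀ j : ℕ, 2 ^ (2 * j + 1) * r ≠ r := by
    intro r hr j hj
    have e1 : ∀ k : ℕ, (2 : R) ^ ((2 * j + 1) * k) * r = r := by
      intro k
      induction k with
      | zero => simp
      | succ k ih =>
        calc (2 : R) ^ ((2 * j + 1) * (k + 1)) * r
            = 2 ^ ((2 * j + 1) * k) * (2 ^ (2 * j + 1) * r) := by ring
          _ = r := by rw [hj, ih]
    have e2 : (2 : R) ^ ((2 * j + 1) * (2 * s)) * r = -r := by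
      calc (2 : R) ^ ((2 * j + 1) * (2 * s)) * r
          = 2 ^ (2 * s) * (2 ^ (4 * s * j) * r) := by ring
        _ = -r := by rw [hfour r hr j, hneg r hr]
    exact hE r hr ((e1 (2 * s)).symm.trans e2)
  let A : Set R := {x | ∃ i : ℕ, x = 2 ^ (2 * i) * ρ x}
  have hAneg : ∀ a ∈ E, a ∈ A → -a ∈ A := by
    rintro a ha ⟨i, hi⟩
    refine ⟨s + i, ?_⟩
    have : ρ (-a) = ρ a := by
      rw [← hneg a ha]; exact hρe _ _ (hOp _ a ha)
    rw [this, ← hneg a ha]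
    conv_lhs => rw [hi]
    ring
  refine ⟨A, fun a ha => ⟨⟨hAneg a ha, fun h => ?_⟩, ?_⟩⟩
  · have h' : -a ∈ E := by rw [← hneg a ha]; exact hpow _ a ha
    simpa using hAneg _ h' h
  · have e : ρ (2 * a) = ρ a := hρe _ _ (hO2 a ha)
    constructor
    · rintro ⟨i, hi⟩ ⟨j, hj⟩
      rw [e] at hj
      have h1 := hs a ha
      -- 2 * 2^(2i) r = 2^(2j) r
      apply hodd (ρ a) (hρE a ha) (i + (2 * s * j - j))
      have hr := hfour (ρ a) (hρE a ha) j
      have k1 : (2 : R) ^ (2 * i + 1) * ρ a = 2 ^ (2 * j) * ρ a := by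
        rw [← hj]
        conv_rhs => rw [hi]
        ring
      have k2 : 4 * s * j = 2 * (2 * s * j - j) + 2 * j := by
        have : j ≤ 2 * s * j := by nlinarith
        have e4 : 4 * s * j = 2 * (2 * s * j) := by ring
        omega
      calc (2 : R) ^ (2 * (i + (2 * s * j - j)) + 1) * ρ a
          = 2 ^ (2 * (2 * s * j - j)) * (2 ^ (2 * i + 1) * ρ a) := by ring
        _ = 2 ^ (2 * (2 * s * j - j) + 2 * j) * ρ a := by rw [k1]; ring
        _ = ρ a := by rw [← k2, hr]
    · intro h
      obtain ⟨i, hi⟩ := hrep a ha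
      rcases Nat.even_or_odd' i with ⟨k, rfl | rfl⟩
      · exact ⟨k, hi⟩
      · exfalso
        apply h
        refine ⟨k + 1, ?_⟩
        rw [e]
        conv_lhs => rw [hi]
        ring

theorem dstar_sym {L : ℕ} {a x : ZMod L} (h : x ∈ dstar ({-a, 0, a} : Finset (ZMod L))) :
    x = a ∨ x = -a ∨ x = 2 * a ∨ x = -(2 * a) := by
  obtain ⟨⟨u, hu, v, hv, rfl⟩, h0⟩ := mem_dstar'.1 h
  simp only [mem_insert, mem_singleton] at hu hv
  rcases hu with rfl | rfl | rfl <;> rcases hv with rfl | rfl | rfl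
  · simp at h0
  · simp
  · right; right; right; ring
  · simp
  · simp at h0
  · simp
  · right; right; left; ring
  · simp
  · simp at h0

theorem lower_bound {L m s : ℕ} (hm : 1 ≤ m) (hLm : L = 8 * m + 2)
    (hs : (4 * m + 1) ∣ 2 ^ (2 * s) + 1) :
    ∃ C : Finset (Finset (ZMod L)), IsSCAC L 3 C ∧ m ≤ C.card := by
  classical
  haveI : NeZero L := ⟨by omega⟩
  haveI : Fact (1 < L) := ⟨by omega⟩
  have h2L : 2 ∣ L := by omega
  let π := ZMod.castHom h2L (ZMod 2)
  let E : Finset (ZMod L) := univ.filter (fun a => a ≠ 0 ∧ π a = 0)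
  have hEmem : ∀ a, a ∈ E ↔ a ≠ 0 ∧ π a = 0 := fun a => by simp [E]
  have hdouble : ∀ a, π a = 0 → 2 * a = 0 → a = 0 := by
    intro a ha h
    have e1 : ((a.val : ℕ) : ZMod L) = a := by simp
    rw [← e1] at ha h ⊢
    rw [map_natCast, ZMod.natCast_eq_zero_iff] at ha
    have h' : ((2 * a.val : ℕ) : ZMod L) = 0 := by push_cast; exact h
    rw [ZMod.natCast_eq_zero_iff] at h' ⊢
    have := ZMod.val_lt a
    obtain ⟨k, hk⟩ := ha
    obtain ⟨j, hj⟩ := h'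
    have : j < 2 := by nlinarith
    interval_cases j
    · exact ⟨0, by omega⟩
    · omega
  have hE2 : ∀ a ∈ E, 2 * a ∈ E := by
    intro a ha
    rw [hEmem] at *
    exact ⟨fun h => ha.1 (hdouble a ha.2 h), by rw [map_mul, ha.2, mul_zero]⟩
  have hEn : ∀ a ∈ E, 2 ^ (2 * s) * a = -a := by
    intro a ha
    rw [hEmem] at ha
    have ha := ha.2
    have e1 : ((a.val : ℕ) : ZMod L) = a := by simp
    rw [← e1] at ha ⊢
    rw [map_natCast, ZMod.natCast_eq_zero_iff] at ha
    rw [eq_neg_iff_add_eq_zero]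
    have : (((2 ^ (2 * s) + 1) * a.val : ℕ) : ZMod L) = 0 := by
      rw [ZMod.natCast_eq_zero_iff]
      have := Nat.mul_dvd_mul hs ha
      have e : (4 * m + 1) * 2 = L := by omega
      rwa [e] at this
    rw [← this]; push_cast; ring
  have hEE : ∀ a ∈ E, a ≠ -a := by
    intro a ha h
    rw [hEmem] at ha
    apply ha.1
    apply hdouble a ha.2
    rw [two_mul]; nth_rewrite 1 [h]; ring
  have hEneg : ∀ a ∈ E, -a ∈ E := by
    intro a ha
    rw [hEmem] at *
    exact ⟨by simpa using ha.1, by rw [map_neg, ha.2, neg_zero]⟩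
  have hcardE : 4 * m ≤ E.card := by
    let f : ℕ → ZMod L := fun i => ((2 * (i + 1) : ℕ) : ZMod L)
    have : (range (4 * m)).card ≤ E.card := by
      apply Finset.card_le_card_of_injOn f
      · intro i hi
        simp only [coe_range, Set.mem_Iio] at hi
        show f i ∈ E
        rw [hEmem]
        constructor
        · simp only [f]
          rw [Ne, ZMod.natCast_eq_zero_iff]
          intro h
          have := Nat.le_of_dvd (by omega) h
          omega
        · simp only [f]
          rw [map_natCast, ZMod.natCast_eq_zero_iff]
          exact ⟨_, rfl⟩
      · intro i hi j hj hij
        simp only [coe_range, Set.mem_Iio] at hi hj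
        have := (ZMod.natCast_eq_natCast_iff' _ _ L).1 hij
        rw [Nat.mod_eq_of_lt (by omega), Nat.mod_eq_of_lt (by omega)] at this
        omega
    simpa using this
  obtain ⟨A, hA⟩ := exists_coloring (E : Set (ZMod L)) s hE2 hEn hEE
  let B : Finset (ZMod L) := E.filter (· ∈ A)
  have hB : ∀ a, a ∈ B ↔ a ∈ E ∧ a ∈ A := fun a => by simp [B]
  have hcardB : 2 * m ≤ B.card := by
    have h1 : (E.filter (· ∉ A)).card ≤ B.card := by
      apply Finset.card_le_card_of_injOn (fun a => 2 * a)
      · intro a ha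
        simp only [coe_filter, Set.mem_setOf_eq] at ha
        show 2 * a ∈ B
        rw [hB]
        refine ⟨hE2 a ha.1, ?_⟩
        by_contra h
        exact ha.2 ((hA a ha.1).2.2 h)
      · intro a ha b hb hab
        simp only [coe_filter, Set.mem_setOf_eq, hEmem] at ha hb
        have := hdouble (a - b) (by rw [map_sub, ha.1.2, hb.1.2, sub_zero])
          (by rw [mul_sub]; exact sub_eq_zero.2 hab)
        exact sub_eq_zero.1 this
    have h2 := Finset.card_filter_add_card_filter_not (s := E) (· ∈ A)
    have h3 : (E.filter (· ∈ A)).card = B.card := rfl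
    omega
  let w : ZMod L → Finset (ZMod L) := fun a => {-a, 0, a}
  have hπd : ∀ a ∈ E, ∀ x ∈ dstar (w a), π x = 0 := by
    intro a ha x hx
    have h := ((hEmem a).1 ha).2
    rcases dstar_sym hx with rfl | rfl | rfl | rfl <;> simp only [map_neg, map_mul, h] <;> simp
  have hπ1 : ∀ a ∈ E, ∀ x, x ∈ dstar (w a) → ∀ b ∈ E, x - 1 ∈ dstar (w b) → False := by
    intro a ha x hx b hb hx'
    have h1 := hπd a ha x hx
    have h2 := hπd b hb _ hx'
    rw [map_sub, h1, map_one] at h2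
    exact absurd h2 (by decide)
  have hnotA : ∀ a b, a ∈ B → b ∈ B → 2 * a ≠ b := by
    intro a b ha hb h
    rw [hB] at ha hb
    exact ((hA a ha.1).2.1 ha.2) (h ▸ hb.2)
  have hnegB : ∀ a ∈ B, -a ∈ B := by
    intro a ha
    rw [hB] at *
    exact ⟨hEneg a ha.1, (hA a ha.1).1.1 ha.2⟩
  have hwneg : ∀ a, w (-a) = w a := by
    intro a
    ext x
    simp only [w, mem_insert, mem_singleton, neg_neg]
    tauto
  have h2inj : ∀ a ∈ B, ∀ b ∈ B, 2 * a = 2 * b → a = b := by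
    intro a ha b hb hab
    rw [hB, hEmem] at ha hb
    have := hdouble (a - b) (by rw [map_sub, ha.1.2, hb.1.2, sub_zero])
      (by rw [mul_sub]; exact sub_eq_zero.2 hab)
    exact sub_eq_zero.1 this
  -- canonical form: up to sign
  have hform : ∀ a ∈ B, ∀ x ∈ dstar (w a), ∃ a' ∈ B, w a' = w a ∧ (x = a' ∨ x = 2 * a') := by
    intro a ha x hx
    rcases dstar_sym hx with h | h | h | h
    · exact ⟨a, ha, rfl, Or.inl h⟩
    · exact ⟨-a, hnegB a ha, hwneg a, Or.inl h⟩
    · exact ⟨a, ha, rfl, Or.inr h⟩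
    · exact ⟨-a, hnegB a ha, hwneg a, Or.inr (by rw [h]; ring)⟩
  have hdd : ∀ a ∈ B, ∀ b ∈ B, ∀ x, x ∈ dstar (w a) → x ∈ dstar (w b) → w a = w b := by
    intro a ha b hb x hxa hxb
    obtain ⟨a', ha', ea, hxa⟩ := hform a ha x hxa
    obtain ⟨b', hb', eb, hxb⟩ := hform b hb x hxb
    rw [← ea, ← eb]
    congr 1
    rcases hxa with h | h <;> rcases hxb with h' | h'
    · rw [← h, ← h']
    · exact absurd (h'.symm.trans h) (hnotA b' a' hb' ha')
    · exact absurd (h.symm.trans h') (hnotA a' b' ha' hb')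
    · exact h2inj a' ha' b' hb' (h.symm.trans h')
  have hBE : ∀ a ∈ B, a ∈ E := fun a ha => ((hB a).1 ha).1
  refine ⟨B.image w, ⟨?_, ?_, ?_⟩, ?_⟩
  · intro I hI
    obtain ⟨a, ha, rfl⟩ := mem_image.1 hI
    have h0 := ((hEmem a).1 (hBE a ha)).1
    have h1 := hEE a (hBE a ha)
    refine Finset.card_eq_three.2 ⟨-a, 0, a, by simpa using h0, h1.symm, h0.symm, rfl⟩
  · intro I hI
    obtain ⟨a, ha, rfl⟩ := mem_image.1 hI
    constructor
    · intro h
      have := hπd a (hBE a ha) _ h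
      rw [map_one] at this
      exact absurd this (by decide)
    · intro h
      have := hπd a (hBE a ha) _ h
      rw [map_neg, map_one] at this
      exact absurd this (by decide)
  · intro I hI J hJ hIJ
    obtain ⟨a, ha, rfl⟩ := mem_image.1 hI
    obtain ⟨b, hb, rfl⟩ := mem_image.1 hJ
    rw [Finset.disjoint_left]
    intro x hxa hxb
    rcases mem_dplus'.1 hxa with h | h <;> rcases mem_dplus'.1 hxb with h' | h'
    · exact hIJ (hdd a ha b hb _ h h')
    · exact hπ1 a (hBE a ha) x h b (hBE b hb) h'
    · exact hπ1 b (hBE b hb) x h' a (hBE a ha) h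
    · exact hIJ (hdd a ha b hb _ h h')
  · have := Finset.card_le_mul_card_image (f := w) B 2 (by
      intro I hI
      obtain ⟨a, ha, rfl⟩ := mem_image.1 hI
      calc _ ≤ ({a, -a} : Finset (ZMod L)).card := by
            apply Finset.card_le_card
            intro x hx
            rw [mem_filter] at hx
            have hx1 : x ∈ w a := by rw [← hx.2]; simp [w]
            have hx0 := ((hEmem x).1 (hBE x hx.1)).1
            simp only [w, mem_insert, mem_singleton] at hx1 ⊢
            tauto
        _ ≤ 2 := Finset.card_le_two)
    omega

theorem MS_general {L m s : ℕ} (hm : 1 ≤ m) (hLm : L = 8 * m + 2)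
    (hs : (4 * m + 1) ∣ 2 ^ (2 * s) + 1) : MS L 3 = m := by
  obtain ⟨C, hC, hc⟩ := lower_bound hm hLm hs
  apply IsGreatest.csSup_eq
  refine ⟨⟨C, hC, le_antisymm (upper_bound hm hLm hC) hc⟩, ?_⟩
  rintro k ⟨C', hC', rfl⟩
  exact upper_bound hm hLm hC'

end helpers

theorem MS_eq_special_lengths (L : ℕ) (hL : 18 ≤ L)
    (hform : (∃ t : ℕ, 1 ≤ t ∧ L = 2 ^ (2 * t + 1) + 2) ∨
             (∃ t : ℕ, 2 ≤ t ∧ L = 2 ^ (2 * t) - 2 ^ (t + 1) + 2) ∨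
             (∃ t : ℕ, 1 ≤ t ∧ L = 2 ^ (2 * t) + 2 ^ (t + 1) + 2)) :
    MS L 3 = (L - 2) / 8 := by
  have key : ∃ m s : ℕ, L = 8 * m + 2 ∧ (4 * m + 1) ∣ 2 ^ (2 * s) + 1 := by
    rcases hform with ⟨t, ht, h⟩ | ⟨t, ht, h⟩ | ⟨t, ht, h⟩
    · obtain ⟨u, rfl⟩ := Nat.exists_eq_add_of_le' ht
      refine ⟨2 ^ (2 * u), u + 1, by rw [h]; ring, ?_⟩
      apply dvd_of_eq; ring
    · obtain ⟨u, rfl⟩ := Nat.exists_eq_add_of_le' ht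
      have e1 : 2 ^ (2 * (u + 2)) = 16 * (2 ^ u * 2 ^ u) := by ring
      have e2 : 2 ^ (u + 2 + 1) = 8 * 2 ^ u := by ring
      rw [e1, e2] at h
      have hx : 1 ≤ 2 ^ u := Nat.one_le_two_pow
      have hle : 2 ^ u ≤ 2 * (2 ^ u * 2 ^ u) := by nlinarith
      obtain ⟨d, hd⟩ := Nat.exists_eq_add_of_le hle
      refine ⟨d, 2 * u + 3, by omega, ⟨8 * (2 ^ u * 2 ^ u) + 4 * 2 ^ u + 1, ?_⟩⟩
      have e3 : 2 ^ (2 * (2 * u + 3)) = 64 * (2 ^ u * 2 ^ u) ^ 2 := by ring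
      rw [e3]
      generalize 2 ^ u = x at *
      zify at *
      have : (d : ℤ) = 2 * (x * x) - x := by linarith
      rw [this]; ring
    · obtain ⟨u, rfl⟩ := Nat.exists_eq_add_of_le' ht
      have e1 : 2 ^ (2 * (u + 1)) = 4 * (2 ^ u * 2 ^ u) := by ring
      have e2 : 2 ^ (u + 1 + 1) = 4 * 2 ^ u := by ring
      rw [e1, e2] at h
      obtain ⟨d, hd⟩ : Even (2 ^ u * (2 ^ u + 1)) := Nat.even_mul_succ_self _
      refine ⟨d, 2 * u + 1, ?_, ?_⟩
      · rw [mul_add] at hd; omega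
      have e3 : 2 ^ (2 * (2 * u + 1)) = 4 * (2 ^ u * 2 ^ u) ^ 2 := by ring
      rw [e3]
      have e4 : 4 * d + 1 = 2 * (2 ^ u * 2 ^ u) + 2 * 2 ^ u + 1 := by
        rw [mul_add] at hd; omega
      rw [e4]
      generalize 2 ^ u = x at *
      have : ((2 * (x * x) + 2 * x + 1 : ℕ) : ℤ) ∣ ((4 * (x * x) ^ 2 + 1 : ℕ) : ℤ) :=
        ⟨2 * (x * x) - 2 * x + 1, by push_cast; ring⟩
      exact_mod_cast this
  obtain ⟨m, s, hLm, hs⟩ := key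
  rw [MS_general (by omega) hLm hs]
  omega
end
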